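/- arXiv:2508.12772 — 2 statements merged into one kernel-verified Lean document; each statement's English description precedes it below -/
import Mathlib

section
/- For any Borel probability measure on ℝ with cumulative distribution function F and characteristic function f, one has sup_{x∈ℝ} |F(x) − Φ(x)| ≤ (1/π) ∫_{−∞}^{+∞} |(f(θ) − e^{−θ²/2})/θ| dθ, the inequality being trivially true when the right-hand side is infinite. -/
open MeasureTheory Filter

namespace BEaux

open scoped FourierTransform SchwartzMap Topology

lemma parseval (φ : 𝓢(ℝ, ℂ)) (μ : Measure ℝ) [IsProbabilityMeasure μ] :
    ∫ y, φ y ∂μ = ∫ θ : ℝ, 𝓕 (φ : ℝ → ℂ) θ * charFun μ (2 * Real.pi * θ) := by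
  have hFour : Integrable (𝓕 (φ : ℝ → ℂ)) := by
    rw [← SchwartzMap.fourier_coe]; exact (𝓕 φ).integrable
  have hinv : ∀ y, φ y = ∫ θ : ℝ, Complex.exp (↑(2 * Real.pi * θ * y) * Complex.I) *
      𝓕 (φ : ℝ → ℂ) θ := by
    intro y
    have h := congrFun (φ.continuous.fourierInv_fourier_eq φ.integrable hFour) y
    rw [← h, Real.fourierInv_eq']
    refine integral_congr_ae (ae_of_all _ fun θ => ?_)
    simp only [smul_eq_mul, RCLike.inner_apply, conj_trivial]
    congr 3
    push_cast; ring
  calc ∫ y, φ y ∂μ = ∫ y, (∫ θ : ℝ, Complex.exp (↑(2 * Real.pi * θ * y) * Complex.I) *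
      𝓕 (φ : ℝ → ℂ) θ) ∂μ := integral_congr_ae (ae_of_all _ hinv)
    _ = ∫ θ : ℝ, ∫ y, Complex.exp (↑(2 * Real.pi * θ * y) * Complex.I) *
      𝓕 (φ : ℝ → ℂ) θ ∂μ := by
        rw [integral_integral_swap]
        have h1 : Integrable (fun p : ℝ × ℝ => 𝓕 (φ : ℝ → ℂ) p.2) (μ.prod volume) :=
          hFour.comp_snd μ
        refine h1.bdd_mul (c := 1) ?_ (ae_of_all _ fun p => ?_)
        · exact Continuous.aestronglyMeasurable (by fun_prop)
        · rw [Complex.norm_exp_ofReal_mul_I]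
    _ = _ := by
        refine integral_congr_ae (ae_of_all _ fun θ => ?_)
        simp only
        rw [integral_mul_const, charFun_apply_real, mul_comm]
        push_cast
        rfl

lemma fourier_bound (φ : 𝓢(ℝ, ℂ)) (C : ℝ) (hC : ∫ y, ‖deriv φ y‖ ≤ C) (θ : ℝ) :
    ‖((2 * Real.pi * θ : ℝ) : ℂ) * 𝓕 (φ : ℝ → ℂ) θ‖ ≤ C := by
  have hd : Integrable (deriv φ) := (SchwartzMap.derivCLM ℝ ℂ φ).integrable
  have h := congrFun (Real.fourier_deriv φ.integrable φ.differentiable hd) θ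
  have h2 : ‖𝓕 (deriv φ) θ‖ ≤ C := by
    refine le_trans ?_ hC
    rw [Real.fourier_eq']
    refine (norm_integral_le_integral_norm _).trans (le_of_eq ?_)
    refine integral_congr_ae (ae_of_all _ fun y => ?_)
    simp only [norm_smul, Complex.norm_exp_ofReal_mul_I, one_mul]
  rw [h] at h2
  simpa using h2

lemma main_bound (φ : 𝓢(ℝ, ℂ)) (C : ℝ) (hC : ∫ y, ‖deriv φ y‖ ≤ C)
    (μ ν : Measure ℝ) [IsProbabilityMeasure μ] [IsProbabilityMeasure ν] :
    ‖∫ y, φ y ∂μ - ∫ y, φ y ∂ν‖ₑ ≤ ENNReal.ofReal (C / (2 * Real.pi)) *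
      ∫⁻ θ : ℝ, ‖(charFun μ θ - charFun ν θ) / (θ : ℂ)‖ₑ := by
  have hFour : Integrable (𝓕 (φ : ℝ → ℂ)) := by
    rw [← SchwartzMap.fourier_coe]; exact (𝓕 φ).integrable
  have hI : ∀ (ρ : Measure ℝ) [IsProbabilityMeasure ρ],
      Integrable (fun θ : ℝ => 𝓕 (φ : ℝ → ℂ) θ * charFun ρ (2 * Real.pi * θ)) := by
    intro ρ _
    refine hFour.mul_bdd (c := 1) ?_ (ae_of_all _ fun p => norm_charFun_le_one _)
    exact (measurable_charFun.comp (by fun_prop)).aestronglyMeasurable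
  have hpi : 0 < 2 * Real.pi := by positivity
  have hC0 : 0 ≤ C := le_trans (integral_nonneg fun _ => norm_nonneg _) hC
  set G : ℝ → ENNReal := fun θ => ‖(charFun μ θ - charFun ν θ) / (θ : ℂ)‖ₑ with hG
  have hGm : Measurable G := by
    have h1 : Measurable (charFun μ) := measurable_charFun
    have h2 : Measurable (charFun ν) := measurable_charFun
    exact ((h1.sub h2).div Complex.measurable_ofReal).enorm
  rw [parseval, parseval, ← integral_sub (hI μ) (hI ν)]
  calc _ ≤ ∫⁻ θ : ℝ, ‖𝓕 (φ : ℝ → ℂ) θ * charFun μ (2 * Real.pi * θ) -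
        𝓕 (φ : ℝ → ℂ) θ * charFun ν (2 * Real.pi * θ)‖ₑ := enorm_integral_le_lintegral_enorm _
    _ ≤ ∫⁻ θ : ℝ, ENNReal.ofReal C * G (2 * Real.pi * θ) := by
        refine lintegral_mono_ae ?_
        have h0 : ∀ᵐ θ : ℝ, θ ≠ 0 := by simp [ae_iff]
        filter_upwards [h0] with θ hθ
        have hθ' : (θ : ℂ) ≠ 0 := by exact_mod_cast hθ
        have hp' : (Real.pi : ℂ) ≠ 0 := by exact_mod_cast Real.pi_ne_zero
        have : 𝓕 (φ : ℝ → ℂ) θ * charFun μ (2 * Real.pi * θ) -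
          𝓕 (φ : ℝ → ℂ) θ * charFun ν (2 * Real.pi * θ) =
          (((2 * Real.pi * θ : ℝ) : ℂ) * 𝓕 (φ : ℝ → ℂ) θ) *
          ((charFun μ (2 * Real.pi * θ) - charFun ν (2 * Real.pi * θ)) /
            ((2 * Real.pi * θ : ℝ) : ℂ)) := by
          push_cast
          field_simp
        rw [this, enorm_mul]
        gcongr
        rw [← ofReal_norm]
        exact ENNReal.ofReal_le_ofReal (fourier_bound φ C hC θ)
    _ = ENNReal.ofReal C * ∫⁻ θ : ℝ, G (2 * Real.pi * θ) :=
        lintegral_const_mul _ (hGm.comp (by fun_prop))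
    _ = ENNReal.ofReal C * (ENNReal.ofReal (1 / (2 * Real.pi)) * ∫⁻ θ : ℝ, G θ) := by
        congr 1
        rw [← lintegral_map (g := fun θ : ℝ => 2 * Real.pi * θ) hGm (by fun_prop),
          Real.map_volume_mul_left hpi.ne', lintegral_smul_measure, abs_of_pos (by positivity)]
        simp
    _ = _ := by
        rw [← mul_assoc, ← ENNReal.ofReal_mul hC0]
        congr 2
        ring

/-- The bump. -/
noncomputable def bump (x : ℝ) (n : ℕ) (y : ℝ) : ℝ :=
  Real.smoothTransition (y + (n + 1)) * Real.smoothTransition ((n + 1) * (x - y) + 1)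

lemma bump_nonneg (x : ℝ) (n : ℕ) (y : ℝ) : 0 ≤ bump x n y :=
  mul_nonneg (Real.smoothTransition.nonneg _) (Real.smoothTransition.nonneg _)

lemma bump_le (x : ℝ) (n : ℕ) (y : ℝ) : bump x n y ≤ 1 :=
  mul_le_one₀ (Real.smoothTransition.le_one _) (Real.smoothTransition.nonneg _)
    (Real.smoothTransition.le_one _)

lemma contDiff_bump (x : ℝ) (n : ℕ) {k : ℕ∞} : ContDiff ℝ k (bump x n) := by
  unfold bump
  have h : ContDiff ℝ k Real.smoothTransition := Real.smoothTransition.contDiff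
  exact (h.comp (by fun_prop)).mul (h.comp (by fun_prop))

lemma bump_zero (x : ℝ) (n : ℕ) (y : ℝ) (hy : y ∉ Set.Ioo (-(n + 1 : ℝ)) (x + 1)) :
    bump x n y = 0 := by
  unfold bump
  by_cases h : y ≤ -(n + 1 : ℝ)
  · rw [Real.smoothTransition.zero_of_nonpos (by linarith), zero_mul]
  · have h2 : x + 1 ≤ y := by
      by_contra h3
      exact hy ⟨not_le.1 h, not_le.1 h3⟩
    have hn : (0 : ℝ) ≤ n := n.cast_nonneg
    rw [Real.smoothTransition.zero_of_nonpos (x := (n + 1) * (x - y) + 1) (by nlinarith), mul_zero]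

lemma bump_tendsto (x y : ℝ) :
    Tendsto (fun n => bump x n y) atTop (𝓝 ((Set.Iic x).indicator (fun _ => (1 : ℝ)) y)) := by
  apply tendsto_const_nhds.congr'
  have h1 : ∀ᶠ n : ℕ in atTop, -y ≤ (n : ℝ) :=
    tendsto_natCast_atTop_atTop.eventually_ge_atTop _
  by_cases hy : y ≤ x
  · filter_upwards [h1] with n hn
    have hn0 : (0 : ℝ) ≤ n := n.cast_nonneg
    unfold bump
    rw [Real.smoothTransition.one_of_one_le (by linarith),
      Real.smoothTransition.one_of_one_le (by nlinarith)]
    simp [hy]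
  · have h2 : ∀ᶠ n : ℕ in atTop, 1 / (y - x) ≤ (n : ℝ) :=
      tendsto_natCast_atTop_atTop.eventually_ge_atTop _
    filter_upwards [h2] with n hn
    push Not at hy
    have h3 : 0 < y - x := by linarith
    rw [div_le_iff₀ h3] at hn
    unfold bump
    rw [Real.smoothTransition.zero_of_nonpos (x := (n + 1) * (x - y) + 1) (by nlinarith)]
    simp [hy]

lemma compact_bump (x : ℝ) (n : ℕ) : HasCompactSupport (fun y => (bump x n y : ℂ)) := by
  refine HasCompactSupport.intro (K := Set.Icc (-(n + 1 : ℝ)) (x + 1)) isCompact_Icc ?_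
  intro y hy
  rw [bump_zero x n y fun h => hy (Set.Ioo_subset_Icc_self h)]
  simp

lemma contDiff_bump' (x : ℝ) (n : ℕ) {k : ℕ∞} : ContDiff ℝ k (fun y => (bump x n y : ℂ)) :=
  Complex.ofRealCLM.contDiff.comp (contDiff_bump x n)

/-- The bump as a Schwartz function. -/
noncomputable def bumpS (x : ℝ) (n : ℕ) : 𝓢(ℝ, ℂ) :=
  (compact_bump x n).toSchwartzMap (contDiff_bump' x n)

lemma bumpS_apply (x : ℝ) (n : ℕ) (y : ℝ) : bumpS x n y = (bump x n y : ℂ) := rfl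

lemma deriv_bumpS (x : ℝ) (n : ℕ) : ∫ y, ‖deriv (bumpS x n) y‖ ≤ 2 := by
  set A : ℝ → ℝ := fun y => Real.smoothTransition (y + (n + 1)) with hA
  set B : ℝ → ℝ := fun y => Real.smoothTransition ((n + 1) * (x - y) + 1) with hB
  have hn0 : (0 : ℝ) ≤ n := n.cast_nonneg
  have hT : ContDiff ℝ 1 Real.smoothTransition := Real.smoothTransition.contDiff
  have hAc : ContDiff ℝ 1 A := hT.comp (by fun_prop)
  have hBc : ContDiff ℝ 1 B := hT.comp (by fun_prop)
  have hAd : Differentiable ℝ A := hAc.differentiable (by norm_num)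
  have hBd : Differentiable ℝ B := hBc.differentiable (by norm_num)
  have hAm : Monotone A := fun a b h => Real.smoothTransition.monotone (by linarith)
  have hBm : Antitone B := fun a b h => Real.smoothTransition.monotone (by nlinarith)
  have hA0 : ∀ y, 0 ≤ A y := fun y => Real.smoothTransition.nonneg _
  have hB0 : ∀ y, 0 ≤ B y := fun y => Real.smoothTransition.nonneg _
  have hA1 : ∀ y, A y ≤ 1 := fun y => Real.smoothTransition.le_one _
  have hB1 : ∀ y, B y ≤ 1 := fun y => Real.smoothTransition.le_one _
  have hder : ∀ y, deriv (bumpS x n) y = ((deriv A y * B y + A y * deriv B y : ℝ) : ℂ) := by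
    intro y
    exact (((hAd y).hasDerivAt.mul (hBd y).hasDerivAt).ofReal_comp).deriv
  have hbd : ∀ y, ‖deriv (bumpS x n) y‖ ≤ deriv A y - deriv B y := by
    intro y
    rw [hder, Complex.norm_real, Real.norm_eq_abs, abs_le]
    have h1 : 0 ≤ deriv A y := hAm.deriv_nonneg
    have h2 : deriv B y ≤ 0 := hBm.deriv_nonpos
    constructor <;> nlinarith [hA0 y, hB0 y, hA1 y, hB1 y]
  set p : ℝ := min (-(n + 1 : ℝ)) (x + 1) with hp
  set q : ℝ := max (-(n + 1 : ℝ)) (x + 1) with hq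
  have hpq : p ≤ q := min_le_max
  have hzero : ∀ y, y ∉ Set.Icc p q → ‖deriv (bumpS x n) y‖ = 0 := by
    intro y hy
    have : (bumpS x n : ℝ → ℂ) =ᶠ[𝓝 y] fun _ => 0 := by
      filter_upwards [isClosed_Icc.isOpen_compl.mem_nhds hy] with z hz
      rw [bumpS_apply, bump_zero]
      · simp
      · intro h
        exact hz ⟨(min_le_left _ _).trans h.1.le, h.2.le.trans (le_max_right _ _)⟩
    rw [this.deriv_eq]
    simp
  have hdA : Continuous (deriv A) := hAc.continuous_deriv (by norm_num)
  have hdB : Continuous (deriv B) := hBc.continuous_deriv (by norm_num)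
  have hd : Integrable (deriv (bumpS x n)) := (SchwartzMap.derivCLM ℝ ℂ (bumpS x n)).integrable
  calc ∫ y, ‖deriv (bumpS x n) y‖ = ∫ y in Set.Icc p q, ‖deriv (bumpS x n) y‖ :=
        (setIntegral_eq_integral_of_forall_compl_eq_zero hzero).symm
    _ = ∫ y in p..q, ‖deriv (bumpS x n) y‖ := by
        rw [integral_Icc_eq_integral_Ioc, intervalIntegral.integral_of_le hpq]
    _ ≤ ∫ y in p..q, (deriv A y - deriv B y) := by
        refine intervalIntegral.integral_mono_on hpq hd.norm.intervalIntegrable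
          ((hdA.sub hdB).intervalIntegrable _ _) fun y _ => hbd y
    _ = (A q - A p) - (B q - B p) := by
        rw [intervalIntegral.integral_sub (hdA.intervalIntegrable _ _)
          (hdB.intervalIntegrable _ _),
          intervalIntegral.integral_deriv_eq_sub (fun y _ => hAd y) (hdA.intervalIntegrable _ _),
          intervalIntegral.integral_deriv_eq_sub (fun y _ => hBd y) (hdB.intervalIntegrable _ _)]
    _ ≤ 2 := by linarith [hA0 p, hA1 q, hB0 q, hB1 p]

lemma tendsto_int (x : ℝ) (μ : Measure ℝ) [IsProbabilityMeasure μ] :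
    Tendsto (fun n => ∫ y, bump x n y ∂μ) atTop (𝓝 (μ (Set.Iic x)).toReal) := by
  have h : ∫ y, (Set.Iic x).indicator (fun _ => (1 : ℝ)) y ∂μ = (μ (Set.Iic x)).toReal := by
    rw [integral_indicator measurableSet_Iic]; simp [Measure.real]
  rw [← h]
  refine tendsto_integral_of_dominated_convergence (fun _ => 1) ?_ (integrable_const _) ?_ ?_
  · exact fun n => (contDiff_bump x n (k := 0)).continuous.aestronglyMeasurable
  · intro n
    refine ae_of_all _ fun y => ?_
    rw [Real.norm_eq_abs, abs_of_nonneg (bump_nonneg _ _ _)]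
    exact bump_le _ _ _
  · exact ae_of_all _ fun y => bump_tendsto x y

lemma cdf_bound (x : ℝ) (μ ν : Measure ℝ) [IsProbabilityMeasure μ] [IsProbabilityMeasure ν] :
    ENNReal.ofReal |(μ (Set.Iic x)).toReal - (ν (Set.Iic x)).toReal| ≤
      ENNReal.ofReal (1 / Real.pi) *
      ∫⁻ θ : ℝ, ‖(charFun μ θ - charFun ν θ) / (θ : ℂ)‖ₑ := by
  have ht : Tendsto (fun n => ENNReal.ofReal |∫ y, bump x n y ∂μ - ∫ y, bump x n y ∂ν|) atTop
      (𝓝 (ENNReal.ofReal |(μ (Set.Iic x)).toReal - (ν (Set.Iic x)).toReal|)) :=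
    ENNReal.tendsto_ofReal ((tendsto_int x μ).sub (tendsto_int x ν)).abs
  refine le_of_tendsto' ht fun n => ?_
  have h := main_bound (bumpS x n) 2 (deriv_bumpS x n) μ ν
  have h2 : (2 : ℝ) / (2 * Real.pi) = 1 / Real.pi := by field_simp
  rw [h2] at h
  refine le_trans (le_of_eq ?_) h
  simp only [bumpS_apply]
  rw [integral_complex_ofReal, integral_complex_ofReal, ← Complex.ofReal_sub,
    ← ofReal_norm, Complex.norm_real, Real.norm_eq_abs]

end BEaux

/-- Lemma A.3 (Berry–Esseen type basic inequality): for a Borel probability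
measure `μ` on `ℝ` with cdf `F` and characteristic function `f`,
`sup_x |F(x) - Φ(x)| ≤ (1/π) ∫ |(f(θ) - e^{-θ²/2})/θ| dθ`,
stated in `ℝ≥0∞` so that it is trivially true when the right-hand side is infinite. -/
theorem berry_esseen_basic_inequality
    (μ : Measure ℝ) [IsProbabilityMeasure μ] :
    (⨆ x : ℝ, ENNReal.ofReal
        |(μ (Set.Iic x)).toReal -
          ∫ y in Set.Iic x, Real.exp (-y^2/2) / Real.sqrt (2 * Real.pi)|)
      ≤ ENNReal.ofReal (1 / Real.pi) *
        ∫⁻ θ : ℝ,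
          (‖((∫ y : ℝ, Complex.exp ((θ : ℂ) * (y : ℂ) * Complex.I) ∂μ)
              - (Real.exp (-θ^2/2) : ℂ)) / (θ : ℂ)‖₊ : ENNReal) := by
  refine iSup_le fun x => ?_
  have h := BEaux.cdf_bound x μ (ProbabilityTheory.gaussianReal 0 1)
  have h1 : (ProbabilityTheory.gaussianReal 0 1 (Set.Iic x)).toReal =
      ∫ y in Set.Iic x, Real.exp (-y^2/2) / Real.sqrt (2 * Real.pi) := by
    rw [ProbabilityTheory.gaussianReal_apply_eq_integral 0 one_ne_zero, ENNReal.toReal_ofReal]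
    · refine integral_congr_ae (ae_of_all _ fun y => ?_)
      simp [ProbabilityTheory.gaussianPDFReal, div_eq_inv_mul]
    · exact integral_nonneg fun y => ProbabilityTheory.gaussianPDFReal_nonneg _ _ _
  rw [h1] at h
  refine h.trans (le_of_eq ?_)
  congr 1
  refine lintegral_congr fun θ => ?_
  rw [charFun_apply_real, ProbabilityTheory.charFun_gaussianReal, enorm_eq_nnnorm]
  congr 4
  push_cast
  congr 1
  simp
  ring
end

section
/- If ∑_{n=1}^∞ sup_{x∈ℝ} |P(Z_n ≤ x | G_n) − Φ(x)| < +∞ P-almost surely, then limsup_{n→∞} Z_n/√(2 log n) ≤ 1 P-almost surely. If, in addition, there exists k ∈ ℕ such that Z_n is G_{n+k}-measurable for each n ≥ 1, then limsup_{n→∞} Z_n/√(2 log n) = 1 P-almost surely. -/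
open MeasureTheory Filter

theorem cond_bc {Ω : Type*} [m : MeasurableSpace Ω] (P : Measure Ω) [IsProbabilityMeasure P]
    (G : ℕ → MeasurableSpace Ω) (hGmono : Monotone G) (hGle : ∀ n, G n ≤ m)
    (A : ℕ → Set Ω) (hA : ∀ n, MeasurableSet (A n))
    (hs : ∀ᵐ ω ∂P, Summable (fun n => (P[(A n).indicator (fun _ => (1:ℝ)) | G n]) ω)) :
    ∀ᵐ ω ∂P, ∀ᶠ n in atTop, ω ∉ A n := by
  set p : ℕ → Ω → ℝ := fun n => P[(A n).indicator (fun _ => (1:ℝ)) | G n] with hp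
  have hp0 : ∀ᵐ ω ∂P, ∀ n, 0 ≤ p n ω := by
    rw [ae_all_iff]; intro n
    exact condExp_nonneg (Eventually.of_forall fun ω => Set.indicator_nonneg (fun _ _ => zero_le_one) ω)
  let S : ℕ → Ω → ℝ := fun n ω => ∑ k ∈ Finset.range (n+1), p k ω
  have hSm : ∀ n, StronglyMeasurable[G n] (S n) := by
    intro n
    refine Finset.stronglyMeasurable_fun_sum _ fun k hk => ?_
    exact (stronglyMeasurable_condExp).mono (hGmono (by simpa [Nat.lt_succ_iff] using hk))
  let B : ℕ → ℕ → Set Ω := fun M n => {ω | S n ω ≤ M}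
  have hB : ∀ M n, MeasurableSet[G n] (B M n) := fun M n =>
    (hSm n).measurable measurableSet_Iic
  have hint : ∀ n, Integrable (p n) P := fun n => integrable_condExp
  have hkey : ∀ M : ℕ, ∀ᵐ ω ∂P, ∀ᶠ n in atTop, ω ∉ A n ∩ B M n := by
    intro M
    have hsm : ∀ n, P.real (A n ∩ B M n) = ∫ ω, (B M n).indicator (p n) ω ∂P := by
      intro n
      rw [integral_indicator (hGle n _ (hB M n)), setIntegral_condExp (hGle n) _ (hB M n),
        setIntegral_indicator (hA n), Set.inter_comm]
      · simp
      · exact (integrable_const _).indicator (hA n)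
    have hsum : Summable (fun n => P.real (A n ∩ B M n)) := by
      refine summable_of_sum_range_le (c := M) (fun n => measureReal_nonneg) fun N => ?_
      simp_rw [hsm]
      rw [← integral_finsetSum _ fun n _ => (hint n).indicator (hGle n _ (hB M n))]
      have : ∫ ω, (M:ℝ) ∂P = M := by simp
      rw [← this]
      refine integral_mono_ae (integrable_finsetSum _ fun n _ => (hint n).indicator (hGle n _ (hB M n))) (integrable_const _) ?_
      filter_upwards [hp0] with ω hω
      have : (∑ n ∈ Finset.range N, (B M n).indicator (p n) ω) ≤ ∑ n ∈ Finset.range N, p n ω ∧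
         (∑ n ∈ Finset.range N, (B M n).indicator (p n) ω) ≤ M := by
        induction N with
        | zero => simp
        | succ N ih =>
          by_cases h : ω ∈ B M N
          · rw [Finset.sum_range_succ, Set.indicator_of_mem h]
            have h2 : S N ω ≤ M := h
            simp only [S] at h2
            rw [Finset.sum_range_succ] at h2 ⊢
            constructor <;> linarith [ih.1]
          · rw [Finset.sum_range_succ, Set.indicator_of_notMem h, Finset.sum_range_succ]
            constructor <;> linarith [ih.1, ih.2, hω N]
      exact this.2
    refine ae_eventually_notMem ?_
    have h3 : ∀ n, P (A n ∩ B M n) = ENNReal.ofReal (P.real (A n ∩ B M n)) := fun n => by simp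
    simp_rw [h3]
    exact hsum.tsum_ofReal_ne_top
  filter_upwards [ae_all_iff.2 hkey, hs, hp0] with ω h1 h2 h3
  obtain ⟨M, hM⟩ := exists_nat_ge (∑' n, p n ω)
  filter_upwards [h1 M] with n hn hAn
  refine hn ⟨hAn, ?_⟩
  exact (h2.sum_le_tsum _ (fun i _ => h3 i)).trans hM

theorem gauss_int : Integrable (fun y : ℝ => Real.exp (-y^2/2) / Real.sqrt (2 * Real.pi)) := by
  have := (integrable_exp_neg_mul_sq (b := 1/2) (by norm_num)).div_const (Real.sqrt (2 * Real.pi))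
  refine this.congr (Eventually.of_forall fun y => ?_)
  simp only; congr 2; ring

theorem gauss_total : ∫ y : ℝ, Real.exp (-y^2/2) / Real.sqrt (2 * Real.pi) = 1 := by
  rw [integral_div]
  have := integral_gaussian (1/2)
  have h2 : ∫ y : ℝ, Real.exp (-y^2/2) = √ (2 * Real.pi) := by
    rw [show 2 * Real.pi = Real.pi / (1/2) by ring, ← this]
    congr 1; ext y; congr 1; ring
  rw [h2, div_self]
  positivity

theorem tail_eq (x : ℝ) : 1 - ∫ y in Set.Iic x, Real.exp (-y^2/2) / Real.sqrt (2 * Real.pi)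
    = ∫ y in Set.Ioi x, Real.exp (-y^2/2) / Real.sqrt (2 * Real.pi) := by
  rw [← gauss_total, ← integral_add_compl (measurableSet_Iic (a := x)) gauss_int, Set.compl_Iic]
  ring

theorem tail_le (x : ℝ) (hx : 0 ≤ x) :
    ∫ y in Set.Ioi x, Real.exp (-y^2/2) / Real.sqrt (2 * Real.pi) ≤ Real.exp (-x^2/2) := by
  have hi := (gauss_int.comp_sub_right x).const_mul (Real.exp (-x^2/2))
  calc _ ≤ ∫ y in Set.Ioi x, Real.exp (-x^2/2) *
        (Real.exp (-(y-x)^2/2) / Real.sqrt (2 * Real.pi)) := by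
        refine setIntegral_mono_on gauss_int.integrableOn hi.integrableOn measurableSet_Ioi ?_
        intro y hy
        rw [← mul_div_assoc, ← Real.exp_add]
        have : x < y := hy
        gcongr
        nlinarith
    _ ≤ ∫ y, Real.exp (-x^2/2) * (Real.exp (-(y-x)^2/2) / Real.sqrt (2 * Real.pi)) := by
        refine setIntegral_le_integral hi (Eventually.of_forall fun y => ?_)
        simp only [Pi.zero_apply]; positivity
    _ = _ := by
        rw [integral_const_mul, integral_sub_right_eq_self (fun y : ℝ => Real.exp (-y^2/2) / Real.sqrt (2 * Real.pi)), gauss_total, mul_one]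

theorem le_tail (x : ℝ) (hx : 0 ≤ x) :
    Real.exp (-(x+1)^2/2) / Real.sqrt (2 * Real.pi) ≤
    ∫ y in Set.Ioi x, Real.exp (-y^2/2) / Real.sqrt (2 * Real.pi) := by
  calc _ = ∫ y in Set.Ioc x (x+1), Real.exp (-(x+1)^2/2) / Real.sqrt (2 * Real.pi) := by
        simp
    _ ≤ ∫ y in Set.Ioc x (x+1), Real.exp (-y^2/2) / Real.sqrt (2 * Real.pi) := by
        refine setIntegral_mono_on (by simp) gauss_int.integrableOn measurableSet_Ioc ?_
        intro y hy
        obtain ⟨h1, h2⟩ := hy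
        gcongr
        linarith
    _ ≤ _ := by
        refine setIntegral_mono_set gauss_int.integrableOn (Eventually.of_forall fun y => ?_) (Eventually.of_forall Set.Ioc_subset_Ioi_self)
        simp only [Pi.zero_apply]; positivity

theorem xn_sq (c : ℝ) (n : ℕ) : (c * Real.sqrt (2 * Real.log n))^2 / 2 = c^2 * Real.log n := by
  rw [mul_pow, Real.sq_sqrt (by have := Real.log_natCast_nonneg n; positivity)]; ring

theorem summable_tail (c : ℝ) (hc : 1 < c) : Summable (fun n : ℕ =>
    ∫ y in Set.Ioi (c * Real.sqrt (2 * Real.log (n+1 : ℕ))), Real.exp (-y^2/2) / Real.sqrt (2 * Real.pi)) := by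
  have h1 : Summable (fun n : ℕ => (n:ℝ) ^ (-c^2)) := Real.summable_nat_rpow.2 (by nlinarith)
  refine Summable.of_nonneg_of_le (fun n => setIntegral_nonneg measurableSet_Ioi fun y _ => by positivity)
    (fun n => ?_) ((summable_nat_add_iff 1).2 h1)
  refine (tail_le _ (by positivity)).trans (le_of_eq ?_)
  rw [neg_div, xn_sq, Real.rpow_def_of_pos (by positivity)]
  congr 1; ring

theorem not_summable_tail (c : ℝ) (hc0 : 0 < c) (hc : c < 1) (k : ℕ) (hk : 0 < k) :
    ¬ Summable (fun j : ℕ => ∫ y in Set.Ioi (c * Real.sqrt (2 * Real.log (k * (j+1) : ℕ))),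
      Real.exp (-y^2/2) / Real.sqrt (2 * Real.pi)) := by
  intro hs
  obtain ⟨C, hC⟩ : ∃ C : ℝ, ∀ n : ℕ, (c * Real.sqrt (2 * Real.log n) + 1)^2 / 2 ≤ Real.log n + C := by
    refine ⟨(1 + 1/(1/c^2-1))/2, fun n => ?_⟩
    have hd : 0 < 1/c^2 - 1 := by
      rw [sub_pos, lt_div_iff₀ (by positivity)]; nlinarith
    have h2 : Real.log n = (1 + (1/c^2-1)) * ((c * Real.sqrt (2 * Real.log n))^2 / 2) := by
      rw [xn_sq]; field_simp; ring
    generalize 1/c^2 - 1 = d at *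
    generalize c * Real.sqrt (2 * Real.log n) = x at *
    rw [h2]
    have h3 : 0 ≤ (d * x - 1)^2 / (2 * d) := by positivity
    have h4 : (d * x - 1)^2 / (2 * d) = d * x^2/2 - x + 1/d/2 := by field_simp; ring
    nlinarith
  have h1 : Summable (fun j : ℕ => Real.exp (-C) / Real.sqrt (2 * Real.pi) / k * ((j+1 : ℕ):ℝ)⁻¹) := by
    refine Summable.of_nonneg_of_le (fun j => by positivity) (fun j => ?_) hs
    refine le_trans ?_ (le_tail _ (by positivity))
    have : Real.exp (-(Real.log (k * (j+1) : ℕ) + C)) / Real.sqrt (2 * Real.pi) ≤ Real.exp (-(c * Real.sqrt (2 * Real.log (k * (j+1) : ℕ))+1)^2/2) / Real.sqrt (2 * Real.pi) := by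
      gcongr
      have := hC (k * (j+1))
      linarith
    refine le_trans (le_of_eq ?_) this
    rw [neg_add, Real.exp_add, Real.exp_neg (Real.log _), Real.exp_log (by positivity)]
    push_cast
    field_simp
  rw [summable_mul_left_iff (by positivity)] at h1
  exact Real.not_summable_natCast_inv ((summable_nat_add_iff 1).1 h1)

theorem cond_summable {Ω : Type*} [m : MeasurableSpace Ω] (P : Measure Ω) [IsProbabilityMeasure P]
    (G : ℕ → MeasurableSpace Ω) (hGle : ∀ n, G n ≤ m)
    (Z : ℕ → Ω → ℝ) (hZmeas : ∀ n, Measurable (Z n))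
    (Φ : ℝ → ℝ)
    (hΦ : ∀ x, Φ x = ∫ y in Set.Iic x, Real.exp (-y^2/2) / Real.sqrt (2 * Real.pi))
    (hsum : ∀ᵐ ω ∂P,
      (∑' n : ℕ, ⨆ x : ℝ, ENNReal.ofReal
        |(P[(fun ω' => if Z (n+1) ω' ≤ x then (1:ℝ) else 0) | G (n+1)]) ω - Φ x|) < ⊤)
    (x : ℕ → ℝ) : ∀ᵐ ω ∂P, Summable (fun n : ℕ =>
      (P[{ω' | x (n+1) < Z (n+1) ω'}.indicator (fun _ => (1:ℝ)) | G (n+1)]) ω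
        - ∫ y in Set.Ioi (x (n+1)), Real.exp (-y^2/2) / Real.sqrt (2 * Real.pi)) := by
  have hc : ∀ᵐ ω ∂P, ∀ n : ℕ,
      (P[{ω' | x (n+1) < Z (n+1) ω'}.indicator (fun _ => (1:ℝ)) | G (n+1)]) ω
      = 1 - (P[(fun ω' => if Z (n+1) ω' ≤ x (n+1) then (1:ℝ) else 0) | G (n+1)]) ω := by
    rw [ae_all_iff]
    intro n
    have hm : MeasurableSet {ω' | Z (n+1) ω' ≤ x (n+1)} := measurableSet_le (hZmeas _) measurable_const
    have hi : Integrable (fun ω' => if Z (n+1) ω' ≤ x (n+1) then (1:ℝ) else 0) P := by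
      have := (integrable_const (μ := P) (1:ℝ)).indicator hm
      refine this.congr (Eventually.of_forall fun ω => ?_)
      simp [Set.indicator_apply]
    have h := condExp_sub (integrable_const (μ := P) (1:ℝ)) hi (G (n+1))
    have he : {ω' | x (n+1) < Z (n+1) ω'}.indicator (fun _ => (1:ℝ)) =
        (fun _ => (1:ℝ)) - (fun ω' => if Z (n+1) ω' ≤ x (n+1) then (1:ℝ) else 0) := by
      ext ω
      by_cases h : Z (n+1) ω ≤ x (n+1)
      · simp [h]
      · simp [h, not_le.1 h]
    rw [he]
    filter_upwards [h] with ω hω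
    rw [hω, condExp_const (hGle _)]
    rfl
  filter_upwards [hc, hsum] with ω h1 h2
  have h3 : ∑' n : ℕ, ENNReal.ofReal
      |(P[(fun ω' => if Z (n+1) ω' ≤ x (n+1) then (1:ℝ) else 0) | G (n+1)]) ω - Φ (x (n+1))| ≠ ⊤ :=
    ne_top_of_le_ne_top h2.ne (ENNReal.tsum_le_tsum fun n => le_iSup (fun x : ℝ => ENNReal.ofReal
        |(P[(fun ω' => if Z (n+1) ω' ≤ x then (1:ℝ) else 0) | G (n+1)]) ω - Φ x|) (x (n+1)))
  have h4 := ENNReal.summable_toReal h3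
  refine Summable.of_norm (h4.congr fun n => ?_)
  rw [ENNReal.toReal_ofReal (abs_nonneg _), h1, ← tail_eq, ← hΦ, Real.norm_eq_abs, abs_sub_comm]
  congr 1
  ring

theorem upper_ae {Ω : Type*} [m : MeasurableSpace Ω] (P : Measure Ω) [IsProbabilityMeasure P]
    (G : ℕ → MeasurableSpace Ω) (hGmono : Monotone G) (hGle : ∀ n, G n ≤ m)
    (Z : ℕ → Ω → ℝ) (hZmeas : ∀ n, Measurable (Z n))
    (Φ : ℝ → ℝ)
    (hΦ : ∀ x, Φ x = ∫ y in Set.Iic x, Real.exp (-y^2/2) / Real.sqrt (2 * Real.pi))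
    (hsum : ∀ᵐ ω ∂P,
      (∑' n : ℕ, ⨆ x : ℝ, ENNReal.ofReal
        |(P[(fun ω' => if Z (n+1) ω' ≤ x then (1:ℝ) else 0) | G (n+1)]) ω - Φ x|) < ⊤)
    (c : ℝ) (hc : 1 < c) :
    ∀ᵐ ω ∂P, ∀ᶠ n : ℕ in atTop, Z n ω / Real.sqrt (2 * Real.log n) ≤ c := by
  have h := cond_summable P G hGle Z hZmeas Φ hΦ hsum (fun n => c * Real.sqrt (2 * Real.log n))
  have h2 := cond_bc P (fun n => G (n+1)) (fun a b hab => hGmono (by omega)) (fun n => hGle _)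
    (fun n => {ω' | c * Real.sqrt (2 * Real.log (n+1 : ℕ)) < Z (n+1) ω'})
    (fun n => measurableSet_lt measurable_const (hZmeas _)) (by
      filter_upwards [h] with ω hω
      simpa using hω.add (summable_tail c hc))
  filter_upwards [h2] with ω hω
  have h3 : ∀ᶠ n : ℕ in atTop, Z n ω ≤ c * Real.sqrt (2 * Real.log n) := by
    rw [← map_add_atTop_eq_nat 1, eventually_map]
    filter_upwards [hω] with n hn
    simpa using hn
  filter_upwards [h3] with n hn
  exact div_le_of_le_mul₀ (Real.sqrt_nonneg _) (by linarith) hn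

theorem lower_ae {Ω : Type*} [m : MeasurableSpace Ω] (P : Measure Ω) [IsProbabilityMeasure P]
    (G : ℕ → MeasurableSpace Ω) (hGmono : Monotone G) (hGle : ∀ n, G n ≤ m)
    (Z : ℕ → Ω → ℝ) (hZmeas : ∀ n, Measurable (Z n))
    (Φ : ℝ → ℝ)
    (hΦ : ∀ x, Φ x = ∫ y in Set.Iic x, Real.exp (-y^2/2) / Real.sqrt (2 * Real.pi))
    (hsum : ∀ᵐ ω ∂P,
      (∑' n : ℕ, ⨆ x : ℝ, ENNReal.ofReal
        |(P[(fun ω' => if Z (n+1) ω' ≤ x then (1:ℝ) else 0) | G (n+1)]) ω - Φ x|) < ⊤)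
    (k : ℕ) (hk : 0 < k) (hZG : ∀ n, 1 ≤ n → Measurable[G (n + k)] (Z n))
    (c : ℝ) (hc0 : 0 < c) (hc : c < 1) :
    ∀ᵐ ω ∂P, ∃ᶠ n : ℕ in atTop, c ≤ Z n ω / Real.sqrt (2 * Real.log n) := by
  have h := cond_summable P G hGle Z hZmeas Φ hΦ hsum (fun n => c * Real.sqrt (2 * Real.log n))
  let A : ℕ → Set Ω := fun n => {ω' | c * Real.sqrt (2 * Real.log n) < Z n ω'}
  have hAm : ∀ n, 1 ≤ n → MeasurableSet[G (n+k)] (A n) := fun n hn =>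
    hZG n hn measurableSet_Ioi
  let F : Filtration ℕ m := ⟨fun j => G (k * (j+1)),
    fun a b hab => hGmono (Nat.mul_le_mul_left k (by omega)), fun j => hGle _⟩
  let s : ℕ → Set Ω := fun j => if j = 0 then ∅ else A (k * j)
  have hs : ∀ j, MeasurableSet[F j] (s j) := by
    intro j
    by_cases hj : j = 0
    · simp [s, hj]
    · simp only [s, hj, if_false]
      exact hAm (k * j) (Nat.mul_pos hk (Nat.pos_of_ne_zero hj))
  have hlevy := ae_mem_limsup_atTop_iff P hs
  have hp0 : ∀ᵐ ω ∂P, ∀ j, 0 ≤ (P[(s (j+1)).indicator (1 : Ω → ℝ) | F j]) ω := by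
    rw [ae_all_iff]; intro n
    exact condExp_nonneg (Eventually.of_forall fun ω => Set.indicator_nonneg (fun _ _ => zero_le_one) ω)
  filter_upwards [h, hlevy, hp0] with ω h1 h2 h3
  have h4 : ω ∈ limsup s atTop := by
    rw [h2, ← not_summable_iff_tendsto_nat_atTop_of_nonneg h3]
    intro h5
    refine not_summable_tail c hc0 hc k hk ?_
    have hinj : Function.Injective (fun j : ℕ => k * (j+1) - 1) := by
      intro a b hab
      have ha : 0 < k * (a+1) := by positivity
      have hb : 0 < k * (b+1) := by positivity
      have : k * (a+1) = k * (b+1) := by simp only at hab; omega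
      have := Nat.eq_of_mul_eq_mul_left hk this
      omega
    have h6 := h1.comp_injective hinj
    refine (h5.sub h6).congr fun j => ?_
    have hj : k * (j+1) - 1 + 1 = k * (j+1) := Nat.sub_add_cancel (by exact Nat.mul_pos hk (by omega))
    simp only [Function.comp_apply]
    rw [hj]
    have : s (j+1) = A (k * (j+1)) := by simp [s]
    rw [this]
    exact sub_sub_cancel _ _
  rw [Filter.mem_limsup_iff_frequently_mem] at h4
  rw [frequently_atTop] at h4 ⊢
  intro a
  obtain ⟨b, hb, hbs⟩ := h4 (a + 2)
  refine ⟨k * b, by nlinarith, ?_⟩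
  have hb0 : b ≠ 0 := by omega
  simp only [s, hb0, if_false] at hbs
  have h7 : c * Real.sqrt (2 * Real.log (k * b : ℕ)) < Z (k * b) ω := hbs
  have h8 : 0 < Real.sqrt (2 * Real.log (k * b : ℕ)) := by
    have : 0 < Real.log (k * b : ℕ) := Real.log_pos (by exact_mod_cast (by nlinarith : 1 < k * b))
    positivity
  rw [le_div_iff₀ h8]
  exact h7.le

theorem real_limsup_le (u : ℕ → ℝ) (h : ∀ i : ℕ, ∀ᶠ n in atTop, u n ≤ 1 + 1 / ((i:ℝ)+1)) :
    limsup u atTop ≤ 1 := by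
  rw [limsup_eq]
  by_cases hb : BddBelow {a | ∀ᶠ n in atTop, u n ≤ a}
  · refine le_of_forall_pos_le_add fun ε hε => ?_
    obtain ⟨i, hi⟩ := exists_nat_one_div_lt hε
    exact (csInf_le hb (h i)).trans (by linarith)
  · rw [Real.sInf_of_not_bddBelow hb]; exact zero_le_one

theorem limsup_of_conditional_normal_approximation
    {Ω : Type*} [m : MeasurableSpace Ω] (P : Measure Ω) [IsProbabilityMeasure P]
    (G : ℕ → MeasurableSpace Ω) (hGmono : Monotone G) (hGle : ∀ n, G n ≤ m)
    (Z : ℕ → Ω → ℝ) (hZmeas : ∀ n, Measurable (Z n))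
    (Φ : ℝ → ℝ)
    (hΦ : ∀ x, Φ x = ∫ y in Set.Iic x, Real.exp (-y^2/2) / Real.sqrt (2 * Real.pi))
    (hsum : ∀ᵐ ω ∂P,
      (∑' n : ℕ, ⨆ x : ℝ, ENNReal.ofReal
        |(P[(fun ω' => if Z (n+1) ω' ≤ x then (1:ℝ) else 0) | G (n+1)]) ω - Φ x|) < ⊤) :
    (∀ᵐ ω ∂P,
      limsup (fun n : ℕ => Z n ω / Real.sqrt (2 * Real.log n)) atTop ≤ 1) ∧
    ((∃ k : ℕ, ∀ n, 1 ≤ n → Measurable[G (n + k)] (Z n)) →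
      ∀ᵐ ω ∂P,
        limsup (fun n : ℕ => Z n ω / Real.sqrt (2 * Real.log n)) atTop = 1) := by
  have hup : ∀ᵐ ω ∂P, ∀ i : ℕ, ∀ᶠ n : ℕ in atTop,
      Z n ω / Real.sqrt (2 * Real.log n) ≤ 1 + 1 / ((i:ℝ)+1) := by
    rw [ae_all_iff]
    intro i
    have : (0:ℝ) < 1 / ((i:ℝ)+1) := by positivity
    exact upper_ae P G hGmono hGle Z hZmeas Φ hΦ hsum _ (by linarith)
  constructor
  · filter_upwards [hup] with ω hω
    exact real_limsup_le _ hω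
  · rintro ⟨k, hk⟩
    have hlow : ∀ᵐ ω ∂P, ∀ i : ℕ, ∃ᶠ n : ℕ in atTop,
        1 - 1 / ((i:ℝ)+2) ≤ Z n ω / Real.sqrt (2 * Real.log n) := by
      rw [ae_all_iff]
      intro i
      have h1 : (0:ℝ) < 1 / ((i:ℝ)+2) := by positivity
      have h2 : 1 / ((i:ℝ)+2) < 1 := by
        rw [div_lt_one (by positivity)]
        have : (0:ℝ) ≤ i := by positivity
        linarith
      exact lower_ae P G hGmono hGle Z hZmeas Φ hΦ hsum (k+1) (by omega)
        (fun n hn => (hk n hn).mono (hGmono (by omega)) le_rfl) _ (by linarith) (by linarith)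
    filter_upwards [hup, hlow] with ω h1 h2
    refine le_antisymm (real_limsup_le _ h1) ?_
    refine le_of_forall_pos_le_add fun ε hε => ?_
    obtain ⟨i, hi⟩ := exists_nat_one_div_lt hε
    have h3 := le_limsup_of_frequently_le (h2 i) ⟨_, eventually_map.2 (h1 0)⟩
    have h4 : 1 / ((i:ℝ)+2) ≤ 1 / ((i:ℝ)+1) := by gcongr; norm_num
    linarith
end
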